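/- Let n ≥ 1, suppose (A,b) satisfies Setting B, and let F : ℝⁿ → ℝⁿ be measurable, ℤⁿ-periodic with ∫_Y |F|² < ∞. Then there exists a measurable ℤⁿ-periodic function u : ℝⁿ → ℝ with ∫_Y u² < ∞ such that ∫_Y u(A:D²φ + b·∇φ) = −∫_Y F·∇φ for every twice continuously differentiable ℤⁿ-periodic φ : ℝⁿ → ℝ. Moreover, if u₁ and u₂ are two such solutions, then u₁ − u₂ = c·r almost everywhere for some constant c ∈ ℝ, where r is the invariant measure, i.e., the (a.e.-unique) measurable ℤⁿ-periodic function with ∫_Y r² < ∞, ∫_Y r = 1 and ∫_Y r(A:D²φ + b·∇φ) = 0 for all such test functions φ. -/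

import Mathlib

open MeasureTheory

noncomputable section

/-- The unit cell `Y = (0,1)^n`. -/
def unitCell (n : ℕ) : Set (Fin n → ℝ) := Set.univ.pi fun _ => Set.Ioo (0 : ℝ) 1

/-- Frobenius norm squared of a matrix. -/
def frobSq {n : ℕ} (M : Matrix (Fin n) (Fin n) ℝ) : ℝ := ∑ i, ∑ j, (M i j) ^ 2

/-- Frobenius inner product of two matrices. -/
def frobInner {n : ℕ} (M N : Matrix (Fin n) (Fin n) ℝ) : ℝ := ∑ i, ∑ j, M i j * N i j

/-- Euclidean norm squared of a vector. -/
def euclSq {n : ℕ} (v : Fin n → ℝ) : ℝ := ∑ i, (v i) ^ 2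

/-- Euclidean dot product. -/
def dotc {n : ℕ} (v w : Fin n → ℝ) : ℝ := ∑ i, v i * w i

/-- `ℤⁿ`-periodicity of a function on `ℝⁿ`. -/
def IsPeriodic {n : ℕ} {α : Type*} (f : (Fin n → ℝ) → α) : Prop :=
  ∀ (x : Fin n → ℝ) (k : Fin n → ℤ), f (x + fun i => (k i : ℝ)) = f x

/-- Partial derivative in direction `i`. -/
def pd {n : ℕ} (f : (Fin n → ℝ) → ℝ) (i : Fin n) (x : Fin n → ℝ) : ℝ :=
  fderiv ℝ f x (Pi.single i 1)

/-- Gradient. -/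
def grad {n : ℕ} (f : (Fin n → ℝ) → ℝ) (x : Fin n → ℝ) : Fin n → ℝ := fun i => pd f i x

/-- Hessian matrix. -/
def hess {n : ℕ} (f : (Fin n → ℝ) → ℝ) (x : Fin n → ℝ) : Matrix (Fin n) (Fin n) ℝ :=
  Matrix.of fun i j => pd (pd f j) i x

/-- Laplacian. -/
def lap {n : ℕ} (f : (Fin n → ℝ) → ℝ) (x : Fin n → ℝ) : ℝ := ∑ i, pd (pd f i) i x

/-- Jacobian matrix of a vector field: `(jac w x) i j = ∂_j w_i (x)`. -/
def jac {n : ℕ} (w : (Fin n → ℝ) → Fin n → ℝ) (x : Fin n → ℝ) : Matrix (Fin n) (Fin n) ℝ :=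
  Matrix.of fun i j => pd (fun y => w y i) j x

/-- Divergence of a vector field. -/
def divg {n : ℕ} (w : (Fin n → ℝ) → Fin n → ℝ) (x : Fin n → ℝ) : ℝ :=
  ∑ i, pd (fun y => w y i) i x

/-- Setting B: symmetric-valued, measurable, `ℤⁿ`-periodic, essentially bounded coefficients,
uniform ellipticity, and the Cordes-type condition with constant `δ ∈ (n/(n+π²), 1]`. -/
structure SettingB {n : ℕ} (A : (Fin n → ℝ) → Matrix (Fin n) (Fin n) ℝ)
    (b : (Fin n → ℝ) → Fin n → ℝ) (lam Lam δ : ℝ) : Prop where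
  symm : ∀ x, (A x).IsSymm
  measA : ∀ i j, Measurable fun x => A x i j
  measb : ∀ i, Measurable fun x => b x i
  perA : IsPeriodic A
  perb : IsPeriodic b
  bddA : ∃ C : ℝ, ∀ᵐ x ∂(volume : Measure (Fin n → ℝ)), frobSq (A x) ≤ C
  bddb : ∃ C : ℝ, ∀ᵐ x ∂(volume : Measure (Fin n → ℝ)), euclSq (b x) ≤ C
  lam_pos : 0 < lam
  lam_le_Lam : lam ≤ Lam
  ellip : ∀ᵐ x ∂(volume : Measure (Fin n → ℝ)), ∀ ξ : Fin n → ℝ,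
    lam * euclSq ξ ≤ dotc ξ (Matrix.mulVec (A x) ξ) ∧
      dotc ξ (Matrix.mulVec (A x) ξ) ≤ Lam * euclSq ξ
  delta_mem : δ ∈ Set.Ioc ((n : ℝ) / ((n : ℝ) + Real.pi ^ 2)) 1
  cordes : ∀ᵐ x ∂(volume : Measure (Fin n → ℝ)),
    (frobSq (A x) + euclSq (b x)) / (Matrix.trace (A x)) ^ 2 ≤ 1 / ((n : ℝ) - 1 + δ)

/-- The renormalization function `γ = tr A / (|A|² + |b|²)`. -/
def gam {n : ℕ} (A : (Fin n → ℝ) → Matrix (Fin n) (Fin n) ℝ)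
    (b : (Fin n → ℝ) → Fin n → ℝ) (x : Fin n → ℝ) : ℝ :=
  Matrix.trace (A x) / (frobSq (A x) + euclSq (b x))

/-- The constant `κ = (δ − n/(n+π²))·(n+π²)/π²`. -/
def kappa (n : ℕ) (δ : ℝ) : ℝ :=
  (δ - (n : ℝ) / ((n : ℝ) + Real.pi ^ 2)) * (((n : ℝ) + Real.pi ^ 2) / Real.pi ^ 2)

/-- The invariant measure: measurable, `ℤⁿ`-periodic, square-integrable over `Y`,
with unit mass over `Y`, solving the stationary FPK equation in the very weak sense. -/
def IsInvariantMeasure {n : ℕ} (A : (Fin n → ℝ) → Matrix (Fin n) (Fin n) ℝ)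
    (b : (Fin n → ℝ) → Fin n → ℝ) (r : (Fin n → ℝ) → ℝ) : Prop :=
  Measurable r ∧ IsPeriodic r ∧
    IntegrableOn (fun x => (r x) ^ 2) (unitCell n) ∧
    (∫ x in unitCell n, r x) = 1 ∧
    ∀ φ : (Fin n → ℝ) → ℝ, ContDiff ℝ 2 φ → IsPeriodic φ →
      (∫ x in unitCell n,
        r x * (frobInner (A x) (hess φ x) + dotc (b x) (grad φ x))) = 0

/-- The bilinear form `B₂`. -/
def B2 {n : ℕ} (A : (Fin n → ℝ) → Matrix (Fin n) (Fin n) ℝ)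
    (b : (Fin n → ℝ) → Fin n → ℝ) (v w : (Fin n → ℝ) → Fin n → ℝ) : ℝ :=
  (∫ x in unitCell n,
    divg v x * (frobInner (gam A b x • A x) (jac w x) + dotc (gam A b x • b x) (w x)))
  + (1 / 2) * ∫ x in unitCell n,
      frobInner (jac v x - (jac v x).transpose) (jac w x - (jac w x).transpose)

/-- A very weak `L²_per(Y)` solution of `-D²:(Au) + ∇·(bu) = ∇·F` in `Y` with
periodic boundary conditions. -/
def IsWeakSolF {n : ℕ} (A : (Fin n → ℝ) → Matrix (Fin n) (Fin n) ℝ)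
    (b : (Fin n → ℝ) → Fin n → ℝ) (F : (Fin n → ℝ) → Fin n → ℝ)
    (u : (Fin n → ℝ) → ℝ) : Prop :=
  Measurable u ∧ IsPeriodic u ∧
    IntegrableOn (fun x => (u x) ^ 2) (unitCell n) ∧
    ∀ φ : (Fin n → ℝ) → ℝ, ContDiff ℝ 2 φ → IsPeriodic φ →
      (∫ x in unitCell n,
        u x * (frobInner (A x) (hess φ x) + dotc (b x) (grad φ x)))
        = -∫ x in unitCell n, dotc (F x) (grad φ x)

theorem unitCell_ae_eq_Icc (n : ℕ) :
    unitCell n =ᵐ[volume] Set.Icc (0 : Fin n → ℝ) 1 :=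
  Measure.univ_pi_Ioo_ae_eq_Icc

theorem unitCell_ae_eq_Ioc (n : ℕ) :
    unitCell n =ᵐ[volume] {x : Fin n → ℝ | ∀ i, x i ∈ Set.Ioc ((0 : Fin n → ℝ) i)
      ((0 : Fin n → ℝ) i + 1)} := by
  have h : (Set.univ.pi fun i : Fin n => Set.Ioc ((0 : Fin n → ℝ) i) ((1 : Fin n → ℝ) i))
      =ᵐ[volume] Set.Icc (0 : Fin n → ℝ) 1 := by
    rw [← Set.pi_univ_Icc]; exact Measure.pi_Ioc_ae_eq_pi_Icc
  refine (unitCell_ae_eq_Icc n).trans (h.symm.trans (Filter.EventuallyEq.of_eq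
    (Set.ext fun x => by simp [Set.mem_pi])))

theorem measurableSet_unitCell (n : ℕ) : MeasurableSet (unitCell n) :=
  MeasurableSet.univ_pi fun _ => measurableSet_Ioo

theorem unitCell_subset_Icc (n : ℕ) : unitCell n ⊆ Set.Icc (0 : Fin n → ℝ) 1 := fun _ hx =>
  ⟨fun i => (hx i trivial).1.le, fun i => (hx i trivial).2.le⟩

instance isProbabilityMeasure_unitCell (n : ℕ) :
    IsProbabilityMeasure ((volume : Measure (Fin n → ℝ)).restrict (unitCell n)) := by
  constructor
  rw [Measure.restrict_apply_univ, unitCell, Real.volume_pi_Ioo]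
  simp

theorem Continuous.memLp_top_unitCell {n : ℕ} {f : (Fin n → ℝ) → ℝ} (hf : Continuous f) :
    MemLp f ⊤ (volume.restrict (unitCell n)) := by
  obtain ⟨C, hC⟩ := (isCompact_Icc (a := (0 : Fin n → ℝ)) (b := 1)).exists_bound_of_continuousOn
    hf.continuousOn
  refine memLp_top_of_bound hf.aestronglyMeasurable C ?_
  filter_upwards [ae_restrict_mem (measurableSet_unitCell n)] with x hx
  exact hC x (unitCell_subset_Icc n hx)

theorem Continuous.integrable_unitCell {n : ℕ} {f : (Fin n → ℝ) → ℝ} (hf : Continuous f) :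
    Integrable f (volume.restrict (unitCell n)) :=
  memLp_one_iff_integrable.1 (hf.memLp_top_unitCell.mono_exponent le_top)

/-- The function on the torus induced by a function on `ℝⁿ` through the representatives
in `(0,1]ⁿ`. -/
def torusLift {n : ℕ} {α : Type*} (f : (Fin n → ℝ) → α) (t : UnitAddTorus (Fin n)) : α :=
  f fun i => (AddCircle.equivIoc (1 : ℝ) 0 (t i) : ℝ)

theorem torusLift_coe {n : ℕ} {α : Type*} {f : (Fin n → ℝ) → α} (hf : IsPeriodic f)
    (x : Fin n → ℝ) : torusLift f (fun i => (x i : UnitAddCircle)) = f x := by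
  have h : ∀ i, ∃ k : ℤ,
      (AddCircle.equivIoc (1 : ℝ) 0 (x i : UnitAddCircle) : ℝ) = x i + k := by
    intro i
    have h1 : ((AddCircle.equivIoc (1 : ℝ) 0 (x i : UnitAddCircle) : ℝ) : UnitAddCircle) = x i :=
      (AddCircle.equivIoc (1 : ℝ) 0).symm_apply_apply _
    obtain ⟨k, hk⟩ := (QuotientAddGroup.eq_iff_sub_mem.1 h1)
    refine ⟨k, ?_⟩
    simp only [zsmul_eq_mul, mul_one] at hk
    linarith
  choose k hk using h
  rw [torusLift, ← hf x k]
  congr 1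
  funext i
  exact hk i

theorem measurable_torusLift {n : ℕ} {f : (Fin n → ℝ) → ℝ} (hf : Measurable f) :
    Measurable (torusLift f) :=
  hf.comp (measurable_pi_lambda _ fun i =>
    measurable_subtype_coe.comp
      ((AddCircle.measurableEquivIoc (1 : ℝ) 0).measurable.comp (measurable_pi_apply i)))

theorem IsPeriodic.integral_shift {n : ℕ} {f : (Fin n → ℝ) → ℝ} (hf : IsPeriodic f)
    (h : Fin n → ℝ) :
    ∫ x in unitCell n, f (x + h) = ∫ x in unitCell n, f x := by
  have key : ∀ a : Fin n → ℝ, ∫ x in {x : Fin n → ℝ | ∀ i, x i ∈ Set.Ioc (a i) (a i + 1)}, f x =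
      ∫ x in {x : Fin n → ℝ | ∀ i, x i ∈ Set.Ioc ((0 : Fin n → ℝ) i)
        ((0 : Fin n → ℝ) i + 1)}, f x := by
    intro a
    have h1 := UnitAddTorus.integral_preimage (torusLift f) a
    have h2 := UnitAddTorus.integral_preimage (torusLift f) 0
    simp only [torusLift_coe hf] at h1 h2
    rw [← h1, ← h2]
  rw [setIntegral_congr_set (unitCell_ae_eq_Ioc n), setIntegral_congr_set (unitCell_ae_eq_Ioc n),
    ← key h]
  refine Eq.trans ?_ ((measurePreserving_add_right volume h).setIntegral_preimage_emb
      (measurableEmbedding_addRight h) f _)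
  congr 2
  ext x
  simp only [Set.mem_ofPred_eq, Set.mem_preimage, Set.mem_Ioc, Pi.add_apply, Pi.zero_apply]
  refine forall_congr' fun i => ?_
  constructor <;> rintro ⟨h1, h2⟩ <;> constructor <;> linarith

theorem ContDiff.continuous_pd {n : ℕ} {q : (Fin n → ℝ) → ℝ} (hq : ContDiff ℝ 1 q) (i : Fin n) :
    Continuous (pd q i) :=
  (hq.continuous_fderiv one_ne_zero).clm_apply continuous_const

theorem ContDiff.contDiff_pd {n : ℕ} {q : (Fin n → ℝ) → ℝ} (hq : ContDiff ℝ 2 q) (i : Fin n) :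
    ContDiff ℝ 1 (pd q i) :=
  (hq.fderiv_right (m := 1) (by norm_num)).clm_apply contDiff_const

theorem IsPeriodic.pd {n : ℕ} {q : (Fin n → ℝ) → ℝ} (hq : IsPeriodic q) (i : Fin n) :
    IsPeriodic (pd q i) := by
  intro x k
  have h : (fun y : Fin n → ℝ => q (y + fun i => (k i : ℝ))) = q := funext fun y => hq y k
  rw [_root_.pd, _root_.pd, ← fderiv_comp_add_right, h]

theorem IsPeriodic.mul {n : ℕ} {p q : (Fin n → ℝ) → ℝ} (hp : IsPeriodic p) (hq : IsPeriodic q) :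
    IsPeriodic fun x => p x * q x := fun x k => by
  change p _ * q _ = _
  rw [hp x k, hq x k]

theorem IsPeriodic.add_const {n : ℕ} {p : (Fin n → ℝ) → ℝ} (hp : IsPeriodic p) (h : Fin n → ℝ) :
    IsPeriodic fun x => p (x + h) := fun x k => by
  change p _ = p _
  rw [add_right_comm, hp]

theorem IsPeriodic.add_single {n : ℕ} {p : (Fin n → ℝ) → ℝ} (hp : IsPeriodic p) (x : Fin n → ℝ)
    (i : Fin n) : p (x + Pi.single i 1) = p x := by
  rw [← hp x (Pi.single i 1)]
  congr 2
  funext j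
  by_cases h : j = i
  · subst h; simp
  · simp [h]

theorem hasDerivAt_shift {n : ℕ} {q : (Fin n → ℝ) → ℝ} (hq : ContDiff ℝ 1 q) (i : Fin n)
    (x : Fin n → ℝ) (t : ℝ) :
    HasDerivAt (fun t : ℝ => q (x + t • Pi.single i 1)) (pd q i (x + t • Pi.single i 1)) t := by
  have h1 : HasDerivAt (fun t : ℝ => x + t • (Pi.single i 1 : Fin n → ℝ)) (Pi.single i 1) t := by
    simpa using ((hasDerivAt_id t).smul_const (Pi.single i 1 : Fin n → ℝ)).const_add x
  exact ((hq.differentiable one_ne_zero _).hasFDerivAt).comp_hasDerivAt t h1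

theorem hasDerivAt_integral_mul_shift {n : ℕ} {p q : (Fin n → ℝ) → ℝ} (hp : Continuous p)
    (hq : ContDiff ℝ 1 q) (i : Fin n) (t : ℝ) :
    HasDerivAt (fun t : ℝ => ∫ x in unitCell n, p x * q (x + t • Pi.single i 1))
      (∫ x in unitCell n, p x * pd q i (x + t • Pi.single i 1)) t := by
  have hc : Continuous fun z : (Fin n → ℝ) × ℝ => p z.1 * pd q i (z.1 + z.2 • Pi.single i 1) :=
    (hp.comp continuous_fst).mul ((hq.continuous_pd i).comp (by fun_prop))
  obtain ⟨C, hC⟩ := ((isCompact_Icc (a := (0 : Fin n → ℝ)) (b := 1)).prod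
    (isCompact_closedBall t 1)).exists_bound_of_continuousOn hc.continuousOn
  have hq0 := hq.continuous
  have hq1 := hq.continuous_pd i
  refine (hasDerivAt_integral_of_dominated_loc_of_deriv_le
    (μ := volume.restrict (unitCell n)) (s := Metric.ball t 1)
    (bound := fun _ => C)
    (F := fun (t : ℝ) x => p x * q (x + t • Pi.single i 1))
    (F' := fun (t : ℝ) x => p x * pd q i (x + t • Pi.single i 1))
    (Metric.ball_mem_nhds t one_pos)
    (Filter.Eventually.of_forall fun s => ?_) ?_ ?_ ?_ (integrable_const _) ?_).2
  · exact Continuous.aestronglyMeasurable (by fun_prop)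
  · exact Continuous.integrable_unitCell (by fun_prop)
  · exact Continuous.aestronglyMeasurable (by fun_prop)
  · filter_upwards [ae_restrict_mem (measurableSet_unitCell n)] with x hx s hs
    exact hC (x, s) ⟨unitCell_subset_Icc n hx, Metric.ball_subset_closedBall hs⟩
  · refine Filter.Eventually.of_forall fun x s _ => ?_
    exact (hasDerivAt_shift hq i x s).const_mul _

theorem pd_mul {n : ℕ} {f g : (Fin n → ℝ) → ℝ} (hf : ContDiff ℝ 1 f) (hg : ContDiff ℝ 1 g)
    (i : Fin n) (x : Fin n → ℝ) :
    pd (fun y => f y * g y) i x = f x * pd g i x + g x * pd f i x := by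
  have := fderiv_fun_mul (hf.differentiable one_ne_zero x) (hg.differentiable one_ne_zero x)
  simp [pd, this]

theorem integral_pd_eq_zero {n : ℕ} {f : (Fin n → ℝ) → ℝ} (hf : ContDiff ℝ 1 f)
    (hfp : IsPeriodic f) (i : Fin n) : ∫ x in unitCell n, pd f i x = 0 := by
  have h := hasDerivAt_integral_mul_shift (p := fun _ => 1) continuous_const hf i 0
  simp only [one_mul, hfp.integral_shift, zero_smul, add_zero] at h
  exact h.unique (hasDerivAt_const _ _)

theorem integral_mul_pd {n : ℕ} {f g : (Fin n → ℝ) → ℝ} (hf : ContDiff ℝ 1 f)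
    (hg : ContDiff ℝ 1 g) (hfp : IsPeriodic f) (hgp : IsPeriodic g) (i : Fin n) :
    ∫ x in unitCell n, pd f i x * g x = -∫ x in unitCell n, f x * pd g i x := by
  have h := integral_pd_eq_zero (hf.mul hg) (hfp.mul hgp) i
  simp only [pd_mul hf hg] at h
  rw [integral_add (hf.continuous.fun_mul (hg.continuous_pd i)).integrable_unitCell
    (hg.continuous.fun_mul (hf.continuous_pd i)).integrable_unitCell] at h
  simp only [mul_comm (pd f i _)]
  linarith

theorem pd_shift {n : ℕ} (g : (Fin n → ℝ) → ℝ) (i : Fin n) (h x : Fin n → ℝ) :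
    pd (fun y => g (y + h)) i x = pd g i (x + h) := by
  rw [pd, pd, fderiv_comp_add_right]

/-- For periodic `C¹` functions, `∫ ∂ᵢf ∂ⱼg = ∫ ∂ⱼf ∂ᵢg`. -/
theorem integral_pd_mul_pd_swap {n : ℕ} {f g : (Fin n → ℝ) → ℝ} (hf : ContDiff ℝ 1 f)
    (hg : ContDiff ℝ 1 g) (hfp : IsPeriodic f) (hgp : IsPeriodic g) (i j : Fin n) :
    ∫ x in unitCell n, pd f i x * pd g j x = ∫ x in unitCell n, pd f j x * pd g i x := by
  have h1 := hasDerivAt_integral_mul_shift (hf.continuous_pd i) hg j 0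
  have h2 := hasDerivAt_integral_mul_shift (hg.continuous_pd i) hf j (-(0 : ℝ))
  have h3 := (h2.scomp (0 : ℝ) (hasDerivAt_neg (0 : ℝ))).neg
  have h4 : (fun t : ℝ => ∫ x in unitCell n, pd f i x * g (x + t • Pi.single j 1)) =
      fun t : ℝ => -∫ x in unitCell n, pd g i x * f (x + (-t) • Pi.single j 1) := by
    funext t
    have hgs : ContDiff ℝ 1 fun x => g (x + t • (Pi.single j 1 : Fin n → ℝ)) :=
      hg.comp (contDiff_id.add contDiff_const)
    rw [integral_mul_pd hf hgs hfp (hgp.add_const _) i]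
    have h5 := ((hgp.pd i).mul (hfp.add_const ((-t) • Pi.single j 1))).integral_shift
      (t • Pi.single j 1)
    rw [← h5]
    simp only [pd_shift, add_assoc, ← add_smul, add_neg_cancel, zero_smul, add_zero, mul_comm]
  rw [h4] at h1
  have h5 := h1.unique h3
  simp only [zero_smul, neg_zero, add_zero, neg_neg, neg_smul, one_smul] at h5
  rw [h5]
  simp only [mul_comm]

/-- One-dimensional Wirtinger inequality in direction `i`, with constant `1/12`. -/
theorem integral_pd_sq_le {n : ℕ} {φ : (Fin n → ℝ) → ℝ} (hφ : ContDiff ℝ 2 φ)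
    (hφp : IsPeriodic φ) (i : Fin n) :
    ∫ x in unitCell n, (pd φ i x) ^ 2 ≤ (1 / 12) * ∫ x in unitCell n, (pd (pd φ i) i x) ^ 2 := by
  set f := pd φ i with hf
  have hf1 : ContDiff ℝ 1 f := hφ.contDiff_pd i
  have hfp : IsPeriodic f := hφp.pd i
  have hfc := hf1.continuous
  set g := pd f i with hg
  have hgc : Continuous g := hf1.continuous_pd i
  have hgp : IsPeriodic g := hfp.pd i
  set R : ℝ → ℝ := fun t => ∫ x in unitCell n, f x * f (x + t • Pi.single i 1) with hR
  set R' : ℝ → ℝ := fun t => ∫ x in unitCell n, f x * g (x + t • Pi.single i 1) with hR'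
  set S : ℝ → ℝ := fun t => ∫ x in unitCell n, f x * φ (x + t • Pi.single i 1) with hS
  have hRd : ∀ t, HasDerivAt R (R' t) t := hasDerivAt_integral_mul_shift hfc hf1 i
  have hSd : ∀ t, HasDerivAt S (R t) t :=
    hasDerivAt_integral_mul_shift hfc (hφ.of_le (by norm_num)) i
  set a := ∫ x in unitCell n, (f x) ^ 2 with ha
  set G := ∫ x in unitCell n, (g x) ^ 2 with hG
  have hR0 : R 0 = a := by simp [hR, ha, sq]
  have hR1 : R 1 = a := by simp [hR, ha, sq, hfp.add_single]
  have hS1 : S 1 = S 0 := by simp [hS, hφp.add_single]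
  have hpos : ∀ t : ℝ, 0 ≤ G - 24 * (t - 1 / 2) * R' t + 144 * (t - 1 / 2) ^ 2 * a := by
    intro t
    have hgt : Continuous fun x => g (x + t • (Pi.single i 1 : Fin n → ℝ)) :=
      hgc.comp (continuous_id.add continuous_const)
    have h1 : ∫ x in unitCell n, (g (x + t • Pi.single i 1)) ^ 2 = G := by
      have hgg : IsPeriodic fun x => g x ^ 2 := fun x k => by
        change g _ ^ 2 = _; rw [hgp x k]
      exact hgg.integral_shift _
    have h2 : ∫ x in unitCell n, (g (x + t • Pi.single i 1) - 12 * (t - 1 / 2) * f x) ^ 2 =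
        G - 24 * (t - 1 / 2) * R' t + 144 * (t - 1 / 2) ^ 2 * a := by
      rw [← h1, ha, hR', ← integral_const_mul, ← integral_const_mul, ← integral_sub,
        ← integral_add]
      · congr 1; funext x; ring
      · exact Continuous.integrable_unitCell (by fun_prop)
      · exact Continuous.integrable_unitCell (by fun_prop)
      · exact Continuous.integrable_unitCell (by fun_prop)
      · exact Continuous.integrable_unitCell (by fun_prop)
    rw [← h2]
    exact integral_nonneg fun x => sq_nonneg _
  have hM : ∀ t : ℝ, HasDerivAt (fun t : ℝ => G * t - 24 * ((t - 1 / 2) * R t - S t)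
      + 48 * a * (t - 1 / 2) ^ 3) (G - 24 * (t - 1 / 2) * R' t + 144 * (t - 1 / 2) ^ 2 * a) t := by
    intro t
    have hid : HasDerivAt (fun t : ℝ => t - 1 / 2) 1 t := (hasDerivAt_id t).sub_const _
    have := (((hasDerivAt_id t).const_mul G).sub
      (((hid.mul (hRd t)).sub (hSd t)).const_mul 24)).add ((hid.pow 3).const_mul (48 * a))
    convert! this using 1
    simp only [Nat.cast_ofNat]
    ring
  have hmono : Monotone (fun t : ℝ => G * t - 24 * ((t - 1 / 2) * R t - S t)
      + 48 * a * (t - 1 / 2) ^ 3) := by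
    refine monotone_of_deriv_nonneg (fun t => (hM t).differentiableAt) fun t => ?_
    rw [(hM t).deriv]
    exact hpos t
  have h01 := hmono (zero_le_one (α := ℝ))
  simp only [hR0, hR1, hS1] at h01
  linarith

theorem pd_comm {n : ℕ} {φ : (Fin n → ℝ) → ℝ} (hφ : ContDiff ℝ 2 φ) (i j : Fin n)
    (x : Fin n → ℝ) : pd (pd φ i) j x = pd (pd φ j) i x := by
  have h : ∀ k l : Fin n, pd (pd φ k) l x =
      fderiv ℝ (fderiv ℝ φ) x (Pi.single l 1) (Pi.single k 1) := by
    intro k l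
    have hd : DifferentiableAt ℝ (fderiv ℝ φ) x :=
      (hφ.fderiv_right (m := 1) (by norm_num)).differentiable one_ne_zero x
    have h1 : HasFDerivAt (pd φ k) _ x := hd.hasFDerivAt.clm_apply
      (hasFDerivAt_const (Pi.single k 1 : Fin n → ℝ) x)
    rw [pd, h1.fderiv]
    simp
  rw [h, h]
  exact (hφ.contDiffAt.isSymmSndFDerivAt (by simp)) _ _

theorem ContDiff.continuous_hess {n : ℕ} {φ : (Fin n → ℝ) → ℝ} (hφ : ContDiff ℝ 2 φ)
    (i j : Fin n) : Continuous fun x => hess φ x i j :=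
  (hφ.contDiff_pd j).continuous_pd i

theorem integral_lap_sq {n : ℕ} {φ : (Fin n → ℝ) → ℝ} (hφ : ContDiff ℝ 2 φ)
    (hφp : IsPeriodic φ) :
    ∫ x in unitCell n, (lap φ x) ^ 2 = ∫ x in unitCell n, frobSq (hess φ x) := by
  have hc := hφ.continuous_hess
  simp only [hess, Matrix.of_apply] at hc
  simp only [lap, frobSq, sq, Finset.sum_mul_sum, hess, Matrix.of_apply]
  rw [integral_finsetSum _ fun i _ => integrable_finsetSum _ fun j _ =>
      ((hc i i).fun_mul (hc j j)).integrable_unitCell,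
    integral_finsetSum _ fun i _ => integrable_finsetSum _ fun j _ =>
      ((hc i j).fun_mul (hc i j)).integrable_unitCell]
  refine Finset.sum_congr rfl fun i _ => ?_
  rw [integral_finsetSum _ fun j _ => ((hc i i).fun_mul (hc j j)).integrable_unitCell,
    integral_finsetSum _ fun j _ => ((hc i j).fun_mul (hc i j)).integrable_unitCell]
  refine Finset.sum_congr rfl fun j _ => ?_
  rw [integral_pd_mul_pd_swap (hφ.contDiff_pd i) (hφ.contDiff_pd j) (hφp.pd i) (hφp.pd j)]
  simp only [pd_comm hφ i j]

theorem integral_hess_add_grad_le {n : ℕ} {φ : (Fin n → ℝ) → ℝ} (hφ : ContDiff ℝ 2 φ)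
    (hφp : IsPeriodic φ) :
    (∫ x in unitCell n, frobSq (hess φ x)) + (∫ x in unitCell n, euclSq (grad φ x)) ≤
      (13 / 12) * ∫ x in unitCell n, (lap φ x) ^ 2 := by
  have hc := hφ.continuous_hess
  have hd := fun i => (hφ.contDiff_pd i).continuous
  have h1 : ∫ x in unitCell n, euclSq (grad φ x) ≤
      (1 / 12) * ∫ x in unitCell n, frobSq (hess φ x) := by
    simp only [euclSq, frobSq, grad]
    rw [integral_finsetSum _ fun i _ => ((hd i).fun_pow 2).integrable_unitCell,
      integral_finsetSum _ fun i _ => integrable_finsetSum _ fun j _ =>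
        ((hc i j).fun_pow 2).integrable_unitCell, Finset.mul_sum]
    refine Finset.sum_le_sum fun i _ => (integral_pd_sq_le hφ hφp i).trans ?_
    refine mul_le_mul_of_nonneg_left ?_ (by norm_num)
    rw [integral_finsetSum _ fun j _ => ((hc i j).fun_pow 2).integrable_unitCell]
    exact Finset.single_le_sum (f := fun j => ∫ x in unitCell n, hess φ x i j ^ 2)
      (fun j _ => integral_nonneg fun x => sq_nonneg _) (Finset.mem_univ i)
  rw [integral_lap_sq hφ hφp]
  linarith

section

attribute [local instance] instMeasureSpaceUnitAddCircle

theorem mFourier_coe {n : ℕ} (k : Fin n → ℤ) (x : Fin n → ℝ) :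
    UnitAddTorus.mFourier k (fun i => (x i : UnitAddCircle)) =
      Complex.cos ((2 * Real.pi * ∑ i, k i * x i : ℝ)) +
        Complex.sin ((2 * Real.pi * ∑ i, k i * x i : ℝ)) * Complex.I := by
  rw [← Complex.exp_mul_I]
  simp only [UnitAddTorus.mFourier, ContinuousMap.coe_mk, fourier_coe_apply]
  rw [← Complex.exp_sum]
  congr 1
  push_cast
  rw [Finset.mul_sum, Finset.sum_mul]
  refine Finset.sum_congr rfl fun i _ => ?_
  ring

/-- A periodic square-integrable function all of whose Fourier coefficients vanish is zero. -/
theorem ae_eq_zero_of_fourier {n : ℕ} {h : (Fin n → ℝ) → ℝ} (hm : Measurable h)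
    (hp : IsPeriodic h) (h2 : MemLp h 2 (volume.restrict (unitCell n)))
    (hcos : ∀ k : Fin n → ℤ,
      ∫ x in unitCell n, Real.cos (2 * Real.pi * ∑ i, k i * x i) * h x = 0)
    (hsin : ∀ k : Fin n → ℤ,
      ∫ x in unitCell n, Real.sin (2 * Real.pi * ∑ i, k i * x i) * h x = 0) :
    h =ᵐ[volume.restrict (unitCell n)] 0 := by
  have hEq := unitCell_ae_eq_Ioc n
  rw [Measure.restrict_congr_set hEq] at h2 ⊢
  have hlift : ∀ f : ℝ → ENNReal, ∫⁻ t : UnitAddTorus (Fin n), f (torusLift h t) =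
      ∫⁻ x in {x : Fin n → ℝ | ∀ i, x i ∈ Set.Ioc ((0 : Fin n → ℝ) i)
        ((0 : Fin n → ℝ) i + 1)}, f (h x) := by
    intro f
    have := UnitAddTorus.lintegral_preimage (fun t => f (torusLift h t)) 0
    simp only [torusLift_coe hp] at this
    exact this
  set e : UnitAddTorus (Fin n) → ℂ := fun t => Complex.ofReal (torusLift h t) with he
  have hem : Measurable e := Complex.measurable_ofReal.comp (measurable_torusLift hm)
  have he2 : MemLp e 2 := by
    refine ⟨hem.aestronglyMeasurable, ?_⟩
    have h3 := h2.2
    rw [eLpNorm_eq_lintegral_rpow_enorm_toReal (by simp) (by simp)] at h3 ⊢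
    have h5 : ∀ y : ℝ, ‖(y : ℂ)‖ₑ = ‖y‖ₑ := fun y => by
      rw [← ofReal_norm, ← ofReal_norm, Complex.norm_real]
    simp only [he, h5]
    rwa [hlift (fun y => ‖y‖ₑ ^ ENNReal.toReal 2)]
  have hcoef : ∀ k, UnitAddTorus.mFourierCoeff e k = 0 := by
    intro k
    rw [UnitAddTorus.mFourierCoeff_eq_integral e k 0, ← setIntegral_congr_set hEq]
    have hint : ∀ {g : (Fin n → ℝ) → ℝ}, Continuous g →
        Integrable (fun x => g x * h x) (volume.restrict (unitCell n)) := by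
      intro g hg
      rw [← Measure.restrict_congr_set hEq] at h2
      exact (h2.integrable one_le_two).mul_of_top_right hg.memLp_top_unitCell
    have h1 := hcos (-k)
    have h3 := hsin (-k)
    have h4 : ∀ x : Fin n → ℝ, UnitAddTorus.mFourier (-k) (fun i => (x i : UnitAddCircle)) •
        e (fun i => (x i : UnitAddCircle)) =
        ((Real.cos (2 * Real.pi * ∑ i, (-k) i * x i) * h x : ℝ) : ℂ) +
        ((Real.sin (2 * Real.pi * ∑ i, (-k) i * x i) * h x : ℝ) : ℂ) * Complex.I := by
      intro x
      rw [mFourier_coe, he]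
      simp only [torusLift_coe hp, smul_eq_mul, Complex.ofReal_mul, Complex.ofReal_cos,
        Complex.ofReal_sin]
      ring
    simp only [h4]
    rw [integral_add, integral_mul_const, integral_complex_ofReal, integral_complex_ofReal, h1, h3]
    · simp
    · exact (hint (by fun_prop)).ofReal
    · exact (hint (by fun_prop)).ofReal.mul_const _
  have hzero : he2.toLp e = 0 := by
    apply UnitAddTorus.mFourierBasis.repr.injective
    ext k
    rw [UnitAddTorus.mFourierBasis_repr, map_zero]
    refine Eq.trans ?_ (hcoef k)
    refine integral_congr_ae ?_
    filter_upwards [he2.coeFn_toLp] with t ht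
    rw [ht]
  have he0 : e =ᵐ[volume] 0 := he2.coeFn_toLp.symm.trans (hzero ▸ Lp.coeFn_zero _ _ _)
  have hl : ∫⁻ t : UnitAddTorus (Fin n), ‖torusLift h t‖ₑ = 0 := by
    rw [lintegral_eq_zero_iff (measurable_torusLift hm).enorm]
    filter_upwards [he0] with t ht
    simpa [he] using ht
  rw [hlift (fun y => ‖y‖ₑ), lintegral_eq_zero_iff hm.enorm] at hl
  filter_upwards [hl] with x hx
  simpa using hx

end

theorem pd_comp_linear {n : ℕ} {g g' : ℝ → ℝ} (hg : ∀ t, HasDerivAt g (g' t) t) (k : Fin n → ℝ)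
    (i : Fin n) (x : Fin n → ℝ) :
    pd (fun y : Fin n → ℝ => g (2 * Real.pi * ∑ j, k j * y j)) i x =
      2 * Real.pi * k i * g' (2 * Real.pi * ∑ j, k j * x j) := by
  have h1 : HasFDerivAt (fun y : Fin n → ℝ => 2 * Real.pi * ∑ j, k j * y j)
      ((2 * Real.pi) • ∑ j, k j • (ContinuousLinearMap.proj j : (Fin n → ℝ) →L[ℝ] ℝ)) x := by
    refine HasFDerivAt.const_mul (HasFDerivAt.fun_sum fun j _ => ?_) _
    exact (ContinuousLinearMap.proj (R := ℝ) (φ := fun _ : Fin n => ℝ) j).hasFDerivAt.const_mul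
      (k j)
  have h2 := (hg _).comp_hasFDerivAt x h1
  have h3 : fderiv ℝ (fun y : Fin n → ℝ => g (2 * Real.pi * ∑ j, k j * y j)) x = _ := h2.fderiv
  rw [pd, h3]
  simp [Pi.single_apply]
  ring

theorem isPeriodic_comp_linear {n : ℕ} {g : ℝ → ℝ} (hg : Function.Periodic g (2 * Real.pi))
    (k : Fin n → ℤ) : IsPeriodic fun x : Fin n → ℝ => g (2 * Real.pi * ∑ j, (k j : ℝ) * x j) := by
  intro x m
  have h : 2 * Real.pi * ∑ j, (k j : ℝ) * (x + fun i => (m i : ℝ)) j =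
      2 * Real.pi * ∑ j, (k j : ℝ) * x j + ((∑ j, k j * m j : ℤ) : ℝ) * (2 * Real.pi) := by
    simp only [Pi.add_apply, mul_add, Finset.sum_add_distrib]
    push_cast
    ring
  change g _ = g _
  rw [h]
  exact hg.int_mul _ _

/-- A square-integrable weakly harmonic periodic function is constant. -/
theorem ae_eq_const_of_weakly_harmonic {n : ℕ} {h : (Fin n → ℝ) → ℝ} (hm : Measurable h)
    (hp : IsPeriodic h) (h2 : MemLp h 2 (volume.restrict (unitCell n)))
    (hh : ∀ φ : (Fin n → ℝ) → ℝ, ContDiff ℝ 2 φ → IsPeriodic φ →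
      ∫ x in unitCell n, lap φ x * h x = 0) :
    h =ᵐ[volume.restrict (unitCell n)] fun _ => ∫ x in unitCell n, h x := by
  set c := ∫ x in unitCell n, h x with hc
  have hi : Integrable h (volume.restrict (unitCell n)) := h2.integrable one_le_two
  have key : ∀ (g g' : ℝ → ℝ), (∀ t, HasDerivAt g (g' t) t) → (∀ t, HasDerivAt g' (-g t) t) →
      Function.Periodic g (2 * Real.pi) → ContDiff ℝ 2 g → ∀ k : Fin n → ℤ,
      ∫ x in unitCell n, g (2 * Real.pi * ∑ i, k i * x i) * (h x - c) = 0 := by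
    intro g g' hg hg' hper hcd k
    have hcd' : ContDiff ℝ 2 fun x : Fin n → ℝ => g (2 * Real.pi * ∑ i, (k i : ℝ) * x i) :=
      hcd.comp (by fun_prop)
    by_cases hk : k = 0
    · subst hk
      simp only [Pi.zero_apply, Int.cast_zero, zero_mul, Finset.sum_const_zero, mul_zero]
      rw [integral_const_mul, integral_sub hi (integrable_const _), integral_const, ← hc]
      simp
    have hlap : ∀ x, lap (fun x : Fin n → ℝ => g (2 * Real.pi * ∑ i, (k i : ℝ) * x i)) x =
        -(∑ i, (2 * Real.pi * k i) ^ 2) * g (2 * Real.pi * ∑ i, (k i : ℝ) * x i) := by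
      intro x
      have h1 : ∀ i, pd (fun x : Fin n → ℝ => g (2 * Real.pi * ∑ i, (k i : ℝ) * x i)) i =
          fun x => (fun t => 2 * Real.pi * k i * g' t) (2 * Real.pi * ∑ j, (k j : ℝ) * x j) :=
        fun i => funext fun x => pd_comp_linear hg _ i x
      simp only [lap]
      rw [← Finset.sum_neg_distrib, Finset.sum_mul]
      refine Finset.sum_congr rfl fun i _ => ?_
      rw [h1, pd_comp_linear (g := fun t => 2 * Real.pi * k i * g' t)
        (fun t => (hg' t).const_mul _)]
      ring
    have hK : 0 < ∑ i, (2 * Real.pi * k i) ^ 2 := by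
      obtain ⟨i, hi⟩ := Function.ne_iff.1 hk
      refine Finset.sum_pos' (fun _ _ => sq_nonneg _) ⟨i, Finset.mem_univ _, ?_⟩
      have : (k i : ℝ) ≠ 0 := by exact_mod_cast hi
      positivity
    have hper' := isPeriodic_comp_linear hper k
    have h0 := hh _ hcd' hper'
    have h1 : ∫ x in unitCell n, lap (fun x : Fin n → ℝ =>
        g (2 * Real.pi * ∑ i, (k i : ℝ) * x i)) x * c = 0 := by
      rw [integral_mul_const]
      simp only [lap]
      rw [integral_finsetSum _ fun i _ =>
        ((hcd'.contDiff_pd i).continuous_pd i).integrable_unitCell]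
      rw [Finset.sum_eq_zero fun i _ => integral_pd_eq_zero (hcd'.contDiff_pd i) (hper'.pd i) i]
      simp
    simp only [hlap] at h0 h1
    simp only [mul_assoc (-∑ i, (2 * Real.pi * (k i : ℝ)) ^ 2)] at h0 h1
    rw [integral_const_mul] at h0 h1
    have h0' := (mul_eq_zero.1 h0).resolve_left (neg_ne_zero.2 hK.ne')
    have h1' := (mul_eq_zero.1 h1).resolve_left (neg_ne_zero.2 hK.ne')
    have hgc := hcd'.continuous
    simp only [mul_sub]
    rw [integral_sub, h0', h1', sub_zero]
    · exact hi.mul_of_top_right hgc.memLp_top_unitCell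
    · exact (hgc.mul continuous_const).integrable_unitCell
  have hz := ae_eq_zero_of_fourier (h := fun x => h x - c) (hm.sub_const c)
    (fun x k => by change h _ - c = h _ - c; rw [hp x k]) (h2.sub (memLp_const c))
    (fun k => key Real.cos (fun t => -Real.sin t) Real.hasDerivAt_cos
      (fun t => (Real.hasDerivAt_sin t).neg) Real.cos_periodic Real.contDiff_cos k)
    (fun k => key Real.sin Real.cos Real.hasDerivAt_sin
      Real.hasDerivAt_cos Real.sin_periodic Real.contDiff_sin k)
  filter_upwards [hz] with x hx
  exact sub_eq_zero.1 hx

/-- Periodic extension of the values in the unit cell. -/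
def periodize {n : ℕ} (f : (Fin n → ℝ) → ℝ) (x : Fin n → ℝ) : ℝ := f fun i => Int.fract (x i)

theorem isPeriodic_periodize {n : ℕ} (f : (Fin n → ℝ) → ℝ) : IsPeriodic (periodize f) := by
  intro x k
  simp [periodize]

theorem Measurable.periodize {n : ℕ} {f : (Fin n → ℝ) → ℝ} (hf : Measurable f) :
    Measurable (periodize f) :=
  hf.comp (measurable_pi_lambda _ fun i => measurable_fract.comp (measurable_pi_apply i))

theorem periodize_ae_eq {n : ℕ} (f : (Fin n → ℝ) → ℝ) :
    periodize f =ᵐ[volume.restrict (unitCell n)] f := by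
  filter_upwards [ae_restrict_mem (measurableSet_unitCell n)] with x hx
  rw [periodize]
  congr 1
  funext i
  exact Int.fract_eq_self.2 ⟨(hx i trivial).1.le, (hx i trivial).2⟩

theorem IsPeriodic.ae_eq_zero {n : ℕ} {w : (Fin n → ℝ) → ℝ} (hw : IsPeriodic w)
    (h0 : w =ᵐ[volume.restrict (unitCell n)] 0) : ∀ᵐ x ∂(volume : Measure (Fin n → ℝ)), w x = 0 := by
  rw [Measure.restrict_congr_set (unitCell_ae_eq_Icc n), Filter.EventuallyEq,
    ae_restrict_iff' measurableSet_Icc] at h0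
  have h1 : ∀ᵐ x ∂(volume : Measure (Fin n → ℝ)), ∀ k : Fin n → ℤ,
      (x + fun i => (k i : ℝ)) ∈ Set.Icc (0 : Fin n → ℝ) 1 → w (x + fun i => (k i : ℝ)) = 0 := by
    rw [ae_all_iff]
    intro k
    exact (measurePreserving_add_right volume fun i => (k i : ℝ)).quasiMeasurePreserving.ae h0
  filter_upwards [h1] with x hx
  rw [← hw x fun i => -⌊x i⌋]
  refine hx _ ⟨fun i => ?_, fun i => ?_⟩
  · simp [Int.floor_le]
  · have := (Int.lt_floor_add_one (x i)).le
    simp only [Int.cast_neg, Pi.add_apply, Pi.one_apply]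
    linarith

theorem frobInner_add_dotc_sq_le {n : ℕ} (M H : Matrix (Fin n) (Fin n) ℝ) (v g : Fin n → ℝ) :
    (frobInner M H + dotc v g) ^ 2 ≤ (frobSq M + euclSq v) * (frobSq H + euclSq g) := by
  have h := Finset.sum_mul_sq_le_sq_mul_sq (Finset.univ : Finset ((Fin n × Fin n) ⊕ Fin n))
    (Sum.elim (fun p => M p.1 p.2) v) (Sum.elim (fun p => H p.1 p.2) g)
  simpa only [frobInner, dotc, frobSq, euclSq, Fintype.sum_sum_type, Fintype.sum_prod_type, Sum.elim_inl, Sum.elim_inr] using h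

theorem frobSq_nonneg {n : ℕ} (M : Matrix (Fin n) (Fin n) ℝ) : 0 ≤ frobSq M :=
  Finset.sum_nonneg fun _ _ => Finset.sum_nonneg fun _ _ => sq_nonneg _

theorem euclSq_nonneg {n : ℕ} (v : Fin n → ℝ) : 0 ≤ euclSq v :=
  Finset.sum_nonneg fun _ _ => sq_nonneg _

theorem trace_sq_le {n : ℕ} (M : Matrix (Fin n) (Fin n) ℝ) :
    M.trace ^ 2 ≤ n * frobSq M := by
  have h1 := sq_sum_le_card_mul_sum_sq (s := (Finset.univ : Finset (Fin n))) (f := fun i => M i i)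
  simp only [Finset.card_univ, Fintype.card_fin] at h1
  refine h1.trans (mul_le_mul_of_nonneg_left (Finset.sum_le_sum fun i _ => ?_) n.cast_nonneg)
  exact Finset.single_le_sum (f := fun j => M i j ^ 2) (fun _ _ => sq_nonneg _) (Finset.mem_univ i)

/-- Consequence of the Cordes condition: the renormalized operator is close to the Laplacian. -/
theorem cordes_pointwise {n : ℕ} {M H : Matrix (Fin n) (Fin n) ℝ} {v g : Fin n → ℝ} {δ : ℝ}
    (hT : 0 < M.trace) (hδ : 0 < (n : ℝ) - 1 + δ)
    (hc : (frobSq M + euclSq v) / M.trace ^ 2 ≤ 1 / ((n : ℝ) - 1 + δ)) :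
    (M.trace / (frobSq M + euclSq v) * (frobInner M H + dotc v g) - H.trace) ^ 2 ≤
      (1 - δ) * (frobSq H + euclSq g) := by
  set S := frobSq M + euclSq v with hS
  set γ := M.trace / S with hγ
  have hfM : 0 < frobSq M := by
    have h1 := trace_sq_le M
    have h2 : 0 < M.trace ^ 2 := by positivity
    by_contra h
    rw [le_antisymm (not_lt.1 h) (frobSq_nonneg M), mul_zero] at h1
    linarith
  have hSp : 0 < S := add_pos_of_pos_of_nonneg hfM (euclSq_nonneg v)
  have h1 : γ * (frobInner M H + dotc v g) - H.trace =
      frobInner (γ • M - 1) H + dotc (γ • v) g := by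
    simp only [frobInner, dotc, Matrix.sub_apply, Matrix.smul_apply, Pi.smul_apply, smul_eq_mul,
      sub_mul, Finset.sum_sub_distrib, mul_add, Finset.mul_sum, Matrix.trace, Matrix.diag,
      Matrix.one_apply, ite_mul, one_mul, zero_mul, Finset.sum_ite_eq, Finset.mem_univ, if_true,
      mul_assoc]
    ring
  have h2 : frobSq (γ • M - 1) + euclSq (γ • v) = γ ^ 2 * S - 2 * γ * M.trace + n := by
    simp only [frobSq, euclSq, hS, Matrix.sub_apply, Matrix.smul_apply, Pi.smul_apply, smul_eq_mul,
      sub_sq, Finset.sum_sub_distrib, Finset.sum_add_distrib, mul_add, Finset.mul_sum,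
      Matrix.trace, Matrix.diag, Matrix.one_apply, mul_pow, mul_ite, mul_one, mul_zero, ite_pow,
      one_pow, Finset.sum_ite_eq, Finset.mem_univ, if_true, mul_assoc]
    simp
    ring
  have h3 : γ ^ 2 * S - 2 * γ * M.trace + n ≤ 1 - δ := by
    have h4 : γ ^ 2 * S - 2 * γ * M.trace + n = n - M.trace ^ 2 / S := by
      rw [hγ]; field_simp; ring
    have h5 : (n : ℝ) - 1 + δ ≤ M.trace ^ 2 / S := by
      rw [div_le_div_iff₀ (by positivity) hδ] at hc
      rw [le_div_iff₀ hSp]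
      linarith
    linarith
  rw [h1]
  refine (frobInner_add_dotc_sq_le _ _ _ _).trans ?_
  rw [h2]
  exact mul_le_mul_of_nonneg_right h3 (add_nonneg (frobSq_nonneg H) (euclSq_nonneg g))

theorem lam_mul_le_trace {n : ℕ} {M : Matrix (Fin n) (Fin n) ℝ} {lam : ℝ}
    (h : ∀ ξ : Fin n → ℝ, lam * euclSq ξ ≤ dotc ξ (M.mulVec ξ)) : n * lam ≤ M.trace := by
  have h1 : ∀ i, lam ≤ M i i := by
    intro i
    simpa [euclSq, dotc, Pi.single_apply, Matrix.mulVec_single] using h (Pi.single i 1)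
  calc (n : ℝ) * lam = ∑ _i : Fin n, lam := by simp
    _ ≤ _ := Finset.sum_le_sum fun i _ => h1 i

theorem exists_inner_eq_of_bound {W H : Type*} [AddCommGroup W] [Module ℝ W]
    [NormedAddCommGroup H] [InnerProductSpace ℝ H] [CompleteSpace H] (L : W →ₗ[ℝ] H)
    (l : W →ₗ[ℝ] ℝ) {C : ℝ} (h : ∀ w, |l w| ≤ C * ‖L w‖) : ∃ u : H, ∀ w, inner ℝ u (L w) = l w := by
  have hker : LinearMap.ker L ≤ LinearMap.ker l := by
    intro w hw
    have h1 := h w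
    rw [LinearMap.mem_ker.1 hw, norm_zero, mul_zero] at h1
    exact abs_nonpos_iff.1 h1
  let m : LinearMap.range L →ₗ[ℝ] ℝ :=
    ((LinearMap.ker L).liftQ l hker).comp L.quotKerEquivRange.symm.toLinearMap
  have hm : ∀ w, m ⟨L w, LinearMap.mem_range_self L w⟩ = l w := by
    intro w
    have h1 : L.quotKerEquivRange.symm ⟨L w, LinearMap.mem_range_self L w⟩ =
        (LinearMap.ker L).mkQ w := L.quotKerEquivRange_symm_apply_image w _
    simp [m, h1]
  obtain ⟨f, hf, -⟩ := exists_extension_norm_eq (LinearMap.range L)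
    (m.mkContinuous C (by rintro ⟨_, w, rfl⟩; rw [hm]; exact h w))
  refine ⟨(InnerProductSpace.toDual ℝ H).symm f, fun w => ?_⟩
  rw [InnerProductSpace.toDual_symm_apply]
  exact (hf ⟨L w, LinearMap.mem_range_self L w⟩).trans (hm w)

theorem eq_zero_of_inner_perturbation {W H : Type*} [AddCommGroup W] [Module ℝ W]
    [NormedAddCommGroup H] [InnerProductSpace ℝ H] [CompleteSpace H] (D G : W →ₗ[ℝ] H) {t : ℝ}
    (ht : t < 1) (h : ∀ w, ‖G w - D w‖ ≤ t * ‖D w‖) {g : H} (hg : ∀ w, inner ℝ g (G w) = 0)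
    (hgD : ∀ z : H, (∀ w, inner ℝ (D w) z = 0) → inner ℝ z g = 0) : g = 0 := by
  have hcl : g ∈ closure (LinearMap.range D : Set H) := by
    rw [← Submodule.topologicalClosure_coe, ← Submodule.orthogonal_orthogonal_eq_closure]
    refine (Submodule.mem_orthogonal _ _).2 fun z hz => hgD z fun w => ?_
    exact (Submodule.mem_orthogonal _ _).1 hz _ (LinearMap.mem_range_self D w)
  have h1 : ∀ y ∈ closure (LinearMap.range D : Set H), inner ℝ g y ≤ ‖g‖ * (t * ‖y‖) := by
    intro y hy
    have hclosed : IsClosed {y : H | inner ℝ g y ≤ ‖g‖ * (t * ‖y‖)} :=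
      isClosed_le (by fun_prop) (by fun_prop)
    refine closure_minimal ?_ hclosed hy
    rintro _ ⟨w, rfl⟩
    have h2 : inner ℝ g (D w) = inner ℝ g (-(G w - D w)) := by
      rw [neg_sub, inner_sub_right, hg w, sub_zero]
    rw [Set.mem_ofPred_eq, h2]
    refine (real_inner_le_norm _ _).trans ?_
    rw [norm_neg]
    exact mul_le_mul_of_nonneg_left (h w) (norm_nonneg _)
  have h2 := h1 g hcl
  rw [real_inner_self_eq_norm_sq] at h2
  by_contra hne
  have : 0 < ‖g‖ := norm_pos_iff.2 hne
  nlinarith [mul_pos this this]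

theorem inner_toLp_eq {α : Type*} [MeasurableSpace α] {μ : Measure α} {f g : α → ℝ}
    (hf : MemLp f 2 μ) (hg : MemLp g 2 μ) :
    inner ℝ (hf.toLp f) (hg.toLp g) = ∫ x, f x * g x ∂μ := by
  rw [L2.inner_def]
  refine integral_congr_ae ?_
  filter_upwards [hf.coeFn_toLp, hg.coeFn_toLp] with x h1 h2
  rw [h1, h2]
  simp [mul_comm]

theorem norm_toLp_sq {α : Type*} [MeasurableSpace α] {μ : Measure α} {f : α → ℝ}
    (hf : MemLp f 2 μ) : ‖hf.toLp f‖ ^ 2 = ∫ x, (f x) ^ 2 ∂μ := by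
  rw [← real_inner_self_eq_norm_sq, inner_toLp_eq]
  simp only [sq]

/-- A linear map into functions with square-integrable values, as a map into `L²`. -/
def linearToLp {W α : Type*} [AddCommGroup W] [Module ℝ W] [MeasurableSpace α] {μ : Measure α}
    (T : W →ₗ[ℝ] (α → ℝ)) (hT : ∀ w, MemLp (T w) 2 μ) : W →ₗ[ℝ] Lp ℝ 2 μ where
  toFun w := (hT w).toLp (T w)
  map_add' v w := by
    rw [← MemLp.toLp_add]
    congr 1
    exact map_add T v w
  map_smul' c w := by
    rw [RingHom.id_apply, ← MemLp.toLp_const_smul]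
    congr 1
    exact map_smul T c w

/-- Periodic `C²` test functions. -/
def perC2 (n : ℕ) : Submodule ℝ ((Fin n → ℝ) → ℝ) where
  carrier := {φ | ContDiff ℝ 2 φ ∧ IsPeriodic φ}
  add_mem' {φ ψ} hφ hψ := ⟨hφ.1.add hψ.1, fun x k => by simp [hφ.2 x k, hψ.2 x k]⟩
  zero_mem' := ⟨contDiff_const, fun _ _ => rfl⟩
  smul_mem' c φ hφ := ⟨contDiff_const.smul hφ.1, fun x k => by simp [hφ.2 x k]⟩

theorem pd_add {n : ℕ} {f g : (Fin n → ℝ) → ℝ} (hf : ContDiff ℝ 1 f) (hg : ContDiff ℝ 1 g)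
    (i : Fin n) : pd (f + g) i = pd f i + pd g i := by
  funext x
  have := fderiv_add (hf.differentiable one_ne_zero x) (hg.differentiable one_ne_zero x)
  simp [pd, this]

theorem pd_smul {n : ℕ} {f : (Fin n → ℝ) → ℝ} (hf : ContDiff ℝ 1 f) (c : ℝ)
    (i : Fin n) : pd (c • f) i = c • pd f i := by
  funext x
  have := fderiv_const_smul (hf.differentiable one_ne_zero x) c
  simp [pd, this]

/-- The partial derivative as a linear map on test functions. -/
def pdLin (n : ℕ) (i : Fin n) : perC2 n →ₗ[ℝ] ((Fin n → ℝ) → ℝ) where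
  toFun φ := pd φ i
  map_add' φ ψ := pd_add (φ.2.1.of_le one_le_two) (ψ.2.1.of_le one_le_two) i
  map_smul' c φ := pd_smul (φ.2.1.of_le one_le_two) c i

/-- The second-order partial derivative as a linear map on test functions. -/
def pdPdLin (n : ℕ) (i j : Fin n) : perC2 n →ₗ[ℝ] ((Fin n → ℝ) → ℝ) where
  toFun φ := pd (pd φ j) i
  map_add' φ ψ := by
    rw [Submodule.coe_add, pd_add (φ.2.1.of_le one_le_two) (ψ.2.1.of_le one_le_two),
      pd_add (φ.2.1.contDiff_pd j) (ψ.2.1.contDiff_pd j)]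
  map_smul' c φ := by
    rw [Submodule.coe_smul, pd_smul (φ.2.1.of_le one_le_two), pd_smul (φ.2.1.contDiff_pd j)]
    rfl

/-- Multiplication by a fixed function as a linear map. -/
def mulLin {α : Type*} (a : α → ℝ) : (α → ℝ) →ₗ[ℝ] (α → ℝ) := LinearMap.mulLeft ℝ a

/-- The nondivergence-form operator as a linear map on test functions. -/
def opLin {n : ℕ} (A : (Fin n → ℝ) → Matrix (Fin n) (Fin n) ℝ) (b : (Fin n → ℝ) → Fin n → ℝ) :
    perC2 n →ₗ[ℝ] ((Fin n → ℝ) → ℝ) :=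
  ∑ i, ∑ j, (mulLin fun x => A x i j) ∘ₗ pdPdLin n i j + ∑ i, (mulLin fun x => b x i) ∘ₗ pdLin n i

theorem opLin_apply {n : ℕ} (A : (Fin n → ℝ) → Matrix (Fin n) (Fin n) ℝ)
    (b : (Fin n → ℝ) → Fin n → ℝ) (φ : perC2 n) (x : Fin n → ℝ) :
    opLin A b φ x = frobInner (A x) (hess φ x) + dotc (b x) (grad φ x) := by
  simp [opLin, frobInner, dotc, hess, grad, mulLin, pdPdLin, pdLin, LinearMap.sum_apply,
    Finset.sum_apply]

/-- The Laplacian as a linear map on test functions. -/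
def lapLin (n : ℕ) : perC2 n →ₗ[ℝ] ((Fin n → ℝ) → ℝ) := ∑ i, pdPdLin n i i

theorem lapLin_apply {n : ℕ} (φ : perC2 n) (x : Fin n → ℝ) : lapLin n φ x = lap φ x := by
  simp [lapLin, lap, pdPdLin, LinearMap.sum_apply, Finset.sum_apply]

theorem memLp_lapLin {n : ℕ} (φ : perC2 n) :
    MemLp (lapLin n φ) ⊤ (volume.restrict (unitCell n)) := by
  refine Continuous.memLp_top_unitCell ?_
  rw [show lapLin n φ = fun x => lap φ x from funext (lapLin_apply φ)]
  exact continuous_finsetSum _ fun i _ => (φ.2.1.contDiff_pd i).continuous_pd i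

theorem memLp_opLin {n : ℕ} {A : (Fin n → ℝ) → Matrix (Fin n) (Fin n) ℝ}
    {b : (Fin n → ℝ) → Fin n → ℝ}
    (hA : ∀ i j, MemLp (fun x => A x i j) ⊤ (volume.restrict (unitCell n)))
    (hb : ∀ i, MemLp (fun x => b x i) ⊤ (volume.restrict (unitCell n))) (φ : perC2 n) :
    MemLp (opLin A b φ) ⊤ (volume.restrict (unitCell n)) := by
  rw [show opLin A b φ = fun x => frobInner (A x) (hess φ x) + dotc (b x) (grad φ x) from
    funext (opLin_apply A b φ)]
  refine MemLp.add (memLp_finsetSum _ fun i _ => memLp_finsetSum _ fun j _ => ?_)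
    (memLp_finsetSum _ fun i _ => ?_)
  · exact ((φ.2.1.continuous_hess i j).memLp_top_unitCell).mul' (hA i j)
  · exact ((φ.2.1.of_le one_le_two).continuous_pd i).memLp_top_unitCell.mul' (hb i)

theorem norm_toLp_le {α : Type*} [MeasurableSpace α] {μ : Measure α} {f g : α → ℝ}
    (hf : MemLp f 2 μ) (hg : MemLp g 2 μ) {t : ℝ} (ht : 0 ≤ t)
    (h : ∫ x, (f x) ^ 2 ∂μ ≤ t ^ 2 * ∫ x, (g x) ^ 2 ∂μ) :
    ‖hf.toLp f‖ ≤ t * ‖hg.toLp g‖ := by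
  rw [← norm_toLp_sq hf, ← norm_toLp_sq hg, ← mul_pow] at h
  exact le_of_sq_le_sq h (mul_nonneg ht (norm_nonneg _))

theorem ae_eq_zero_of_toLp_eq_zero {α : Type*} [MeasurableSpace α] {μ : Measure α} {f : α → ℝ}
    (hf : MemLp f 2 μ) (h : hf.toLp f = 0) : f =ᵐ[μ] 0 := by
  have h1 := hf.coeFn_toLp
  rw [h] at h1
  exact h1.symm.trans (Lp.coeFn_zero _ _ _)

theorem exists_periodic_rep {n : ℕ} (z : Lp ℝ 2 ((volume : Measure (Fin n → ℝ)).restrict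
    (unitCell n))) : ∃ f : (Fin n → ℝ) → ℝ, Measurable f ∧ IsPeriodic f ∧
      ∃ hf : MemLp f 2 (volume.restrict (unitCell n)), hf.toLp f = z := by
  have hae := periodize_ae_eq (n := n) (z : (Fin n → ℝ) → ℝ)
  have hf : MemLp (periodize (z : (Fin n → ℝ) → ℝ)) 2 (volume.restrict (unitCell n)) :=
    (memLp_congr_ae hae).2 (Lp.memLp z)
  refine ⟨periodize z, (Lp.stronglyMeasurable z).measurable.periodize, isPeriodic_periodize _,
    hf, ?_⟩
  exact Lp.ext (hf.coeFn_toLp.trans hae)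

theorem euclSq_apply_le {n : ℕ} (v : Fin n → ℝ) (i : Fin n) : (v i) ^ 2 ≤ euclSq v :=
  Finset.single_le_sum (f := fun i => v i ^ 2) (fun _ _ => sq_nonneg _) (Finset.mem_univ i)

theorem frobSq_apply_le {n : ℕ} (M : Matrix (Fin n) (Fin n) ℝ) (i j : Fin n) :
    (M i j) ^ 2 ≤ frobSq M :=
  (euclSq_apply_le (M i) j).trans (Finset.single_le_sum (f := fun i => ∑ j, M i j ^ 2)
    (fun _ _ => Finset.sum_nonneg fun _ _ => sq_nonneg _) (Finset.mem_univ i))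

theorem memLp_top_of_sq_le {α : Type*} [MeasurableSpace α] {μ : Measure α} {f : α → ℝ}
    (hf : Measurable f) {C : ℝ} (h : ∀ᵐ x ∂μ, (f x) ^ 2 ≤ C) : MemLp f ⊤ μ := by
  refine memLp_top_of_bound hf.aestronglyMeasurable (Real.sqrt C) ?_
  filter_upwards [h] with x hx
  exact Real.abs_le_sqrt hx

theorem memLp_lapLin_two {n : ℕ} (φ : perC2 n) :
    MemLp (lapLin n φ) 2 (volume.restrict (unitCell n)) :=
  (memLp_lapLin φ).mono_exponent le_top

/-- The `L²`-class of the Laplacian. -/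
def lapOp (n : ℕ) :
    perC2 n →ₗ[ℝ] Lp ℝ 2 ((volume : Measure (Fin n → ℝ)).restrict (unitCell n)) :=
  linearToLp (lapLin n) memLp_lapLin_two

theorem inner_lapOp {n : ℕ} {f : (Fin n → ℝ) → ℝ}
    (hf : MemLp f 2 (volume.restrict (unitCell n))) (φ : perC2 n) :
    inner ℝ (lapOp n φ) (hf.toLp f) = ∫ x in unitCell n, lap φ x * f x := by
  simp only [← lapLin_apply]
  exact inner_toLp_eq (memLp_lapLin_two φ) hf

namespace SettingB

variable {n : ℕ} {A : (Fin n → ℝ) → Matrix (Fin n) (Fin n) ℝ} {b : (Fin n → ℝ) → Fin n → ℝ}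
  {lam Lam δ : ℝ}

theorem memLp_A (h : SettingB A b lam Lam δ) (i j : Fin n) :
    MemLp (fun x => A x i j) ⊤ (volume.restrict (unitCell n)) := by
  obtain ⟨C, hC⟩ := h.bddA
  refine memLp_top_of_sq_le (h.measA i j) (C := C) ?_
  filter_upwards [ae_restrict_of_ae hC] with x hx
  exact (frobSq_apply_le _ i j).trans hx

theorem memLp_b (h : SettingB A b lam Lam δ) (i : Fin n) :
    MemLp (fun x => b x i) ⊤ (volume.restrict (unitCell n)) := by
  obtain ⟨C, hC⟩ := h.bddb
  refine memLp_top_of_sq_le (h.measb i) (C := C) ?_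
  filter_upwards [ae_restrict_of_ae hC] with x hx
  exact (euclSq_apply_le _ i).trans hx

theorem measurable_gam (h : SettingB A b lam Lam δ) : Measurable (gam A b) := by
  have hA := h.measA
  have hb := h.measb
  unfold gam frobSq euclSq Matrix.trace Matrix.diag
  fun_prop

theorem trace_lower (h : SettingB A b lam Lam δ) :
    ∀ᵐ x ∂(volume : Measure (Fin n → ℝ)), n * lam ≤ (A x).trace := by
  filter_upwards [h.ellip] with x hx
  exact lam_mul_le_trace fun ξ => (hx ξ).1

theorem gam_bounds (hn : 1 ≤ n) (h : SettingB A b lam Lam δ) :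
    ∃ C : ℝ, ∀ᵐ x ∂(volume : Measure (Fin n → ℝ)),
      0 < gam A b x ∧ gam A b x ≤ 1 / lam ∧ (gam A b x)⁻¹ ≤ C := by
  obtain ⟨C₁, hC₁⟩ := h.bddA
  obtain ⟨C₂, hC₂⟩ := h.bddb
  have hn' : (1 : ℝ) ≤ n := by exact_mod_cast hn
  have hl := h.lam_pos
  have hnl : 0 < n * lam := by positivity
  refine ⟨(C₁ + C₂) / (n * lam), ?_⟩
  filter_upwards [hC₁, hC₂, h.trace_lower] with x h1 h2 h3
  have hT : 0 < (A x).trace := hnl.trans_le h3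
  have h4 := trace_sq_le (A x)
  have h5 := euclSq_nonneg (b x)
  have hf : 0 < frobSq (A x) := by
    by_contra hc
    rw [le_antisymm (not_lt.1 hc) (frobSq_nonneg _), mul_zero] at h4
    nlinarith
  have hS : 0 < frobSq (A x) + euclSq (b x) := by linarith
  refine ⟨div_pos hT hS, ?_, ?_⟩
  · rw [gam, div_le_div_iff₀ hS hl]
    have h6 : (A x).trace * (n * lam) ≤ n * frobSq (A x) := by nlinarith
    have h7 : n * ((A x).trace * lam) ≤ n * frobSq (A x) := by linarith
    have h8 := le_of_mul_le_mul_left h7 (by linarith)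
    linarith
  · rw [gam, inv_div]
    exact div_le_div₀ (by linarith) (by linarith) hnl h3

theorem memLp_gam (hn : 1 ≤ n) (h : SettingB A b lam Lam δ) :
    MemLp (gam A b) ⊤ (volume.restrict (unitCell n)) := by
  obtain ⟨C, hC⟩ := h.gam_bounds hn
  refine memLp_top_of_bound h.measurable_gam.aestronglyMeasurable (1 / lam) ?_
  filter_upwards [ae_restrict_of_ae hC] with x hx
  rw [Real.norm_eq_abs, abs_of_pos hx.1]
  exact hx.2.1

theorem memLp_gam_inv (hn : 1 ≤ n) (h : SettingB A b lam Lam δ) :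
    MemLp (fun x => (gam A b x)⁻¹) ⊤ (volume.restrict (unitCell n)) := by
  obtain ⟨C, hC⟩ := h.gam_bounds hn
  refine memLp_top_of_bound h.measurable_gam.inv.aestronglyMeasurable C ?_
  filter_upwards [ae_restrict_of_ae hC] with x hx
  rw [Real.norm_eq_abs, abs_of_pos (inv_pos.2 hx.1)]
  exact hx.2.2

theorem delta_pos (hn : 1 ≤ n) (h : SettingB A b lam Lam δ) : 0 < δ := by
  have hn' : (1 : ℝ) ≤ n := by exact_mod_cast hn
  exact lt_trans (by positivity) h.delta_mem.1

theorem contraction_lt_one (hn : 1 ≤ n) (h : SettingB A b lam Lam δ) :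
    (1 - δ) * (13 / 12) < 1 := by
  have hn' : (1 : ℝ) ≤ n := by exact_mod_cast hn
  have h1 := h.delta_mem.1
  have hpi : Real.pi ^ 2 < 12 := by nlinarith [Real.pi_lt_d2, Real.pi_pos]
  have hpi0 : 0 < Real.pi ^ 2 := by positivity
  have h2 : (1 : ℝ) / 13 < n / (n + Real.pi ^ 2) := by
    rw [div_lt_div_iff₀ (by norm_num) (by positivity)]
    linarith
  linarith

theorem integral_gam_mul_sub_lap_le (hn : 1 ≤ n) (h : SettingB A b lam Lam δ) (φ : perC2 n) :
    ∫ x in unitCell n, (gam A b x * opLin A b φ x - lapLin n φ x) ^ 2 ≤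
      (1 - δ) * (13 / 12) * ∫ x in unitCell n, (lapLin n φ x) ^ 2 := by
  have hn' : (1 : ℝ) ≤ n := by exact_mod_cast hn
  have hδ := h.delta_pos hn
  have hl := h.lam_pos
  have hc1 := fun i j => φ.2.1.continuous_hess i j
  have hc2 := fun i => (φ.2.1.of_le one_le_two).continuous_pd i
  have hi1 : Integrable (fun x => frobSq (hess φ x)) (volume.restrict (unitCell n)) :=
    Continuous.integrable_unitCell (continuous_finsetSum _ fun i _ =>
      continuous_finsetSum _ fun j _ => (hc1 i j).pow 2)
  have hi2 : Integrable (fun x => euclSq (grad φ x)) (volume.restrict (unitCell n)) :=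
    Continuous.integrable_unitCell (continuous_finsetSum _ fun i _ => (hc2 i).pow 2)
  calc _ ≤ ∫ x in unitCell n, (1 - δ) * (frobSq (hess φ x) + euclSq (grad φ x)) := by
        refine integral_mono_ae ?_ ((hi1.add hi2).const_mul _) ?_
        · exact (((memLp_opLin h.memLp_A h.memLp_b φ).mul' (h.memLp_gam hn)).sub
            (memLp_lapLin φ)).mono_exponent le_top |>.integrable_sq
        · filter_upwards [ae_restrict_of_ae h.trace_lower, ae_restrict_of_ae h.cordes] with x h1 h2
          have h3 := cordes_pointwise (H := hess φ x) (g := grad φ x)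
            (lt_of_lt_of_le (by positivity) h1) (by linarith) h2
          rw [opLin_apply, lapLin_apply]
          exact h3
    _ = (1 - δ) * ((∫ x in unitCell n, frobSq (hess φ x)) +
          ∫ x in unitCell n, euclSq (grad φ x)) := by
        rw [integral_const_mul, integral_add hi1 hi2]
    _ ≤ _ := by
        simp only [lapLin_apply]
        rw [mul_assoc]
        exact mul_le_mul_of_nonneg_left (integral_hess_add_grad_le φ.2.1 φ.2.2)
          (by linarith [h.delta_mem.2])

theorem memLp_gamLin (hn : 1 ≤ n) (h : SettingB A b lam Lam δ) (φ : perC2 n) :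
    MemLp ((mulLin (gam A b) ∘ₗ opLin A b) φ) 2 (volume.restrict (unitCell n)) :=
  ((memLp_opLin h.memLp_A h.memLp_b φ).mul' (h.memLp_gam hn)).mono_exponent le_top

/-- The `L²`-class of the renormalized operator. -/
def gamOp (hn : 1 ≤ n) (h : SettingB A b lam Lam δ) :
    perC2 n →ₗ[ℝ] Lp ℝ 2 ((volume : Measure (Fin n → ℝ)).restrict (unitCell n)) :=
  linearToLp (mulLin (gam A b) ∘ₗ opLin A b) (h.memLp_gamLin hn)

theorem inner_gamOp (hn : 1 ≤ n) (h : SettingB A b lam Lam δ) {f : (Fin n → ℝ) → ℝ}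
    (hf : MemLp f 2 (volume.restrict (unitCell n))) (φ : perC2 n) :
    inner ℝ (hf.toLp f) (h.gamOp hn φ) =
      ∫ x in unitCell n, f x * (gam A b x * opLin A b φ x) :=
  inner_toLp_eq hf (h.memLp_gamLin hn φ)

theorem norm_gamOp_sub_lapOp_le (hn : 1 ≤ n) (h : SettingB A b lam Lam δ) (φ : perC2 n) :
    ‖h.gamOp hn φ - lapOp n φ‖ ≤ Real.sqrt ((1 - δ) * (13 / 12)) * ‖lapOp n φ‖ := by
  have h1 : h.gamOp hn φ - lapOp n φ =
      ((h.memLp_gamLin hn φ).sub (memLp_lapLin_two φ)).toLp _ :=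
    (MemLp.toLp_sub (h.memLp_gamLin hn φ) (memLp_lapLin_two φ)).symm
  rw [h1]
  refine norm_toLp_le _ (memLp_lapLin_two φ) (Real.sqrt_nonneg _) ?_
  rw [Real.sq_sqrt (mul_nonneg (by linarith [h.delta_mem.2]) (by norm_num))]
  exact h.integral_gam_mul_sub_lap_le hn φ

theorem ae_eq_zero_of_weak (hn : 1 ≤ n) (h : SettingB A b lam Lam δ) {w : (Fin n → ℝ) → ℝ}
    (hw2 : MemLp w 2 (volume.restrict (unitCell n)))
    (hw : ∀ φ : perC2 n, ∫ x in unitCell n, w x * opLin A b φ x = 0)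
    (hJ : ∫ x in unitCell n, w x * (gam A b x)⁻¹ = 0) :
    w =ᵐ[volume.restrict (unitCell n)] 0 := by
  obtain ⟨C, hC⟩ := h.gam_bounds hn
  have hg2 : MemLp (fun x => w x * (gam A b x)⁻¹) 2 (volume.restrict (unitCell n)) :=
    (h.memLp_gam_inv hn).mul' hw2
  have hlt : Real.sqrt ((1 - δ) * (13 / 12)) < 1 := by
    rw [Real.sqrt_lt' one_pos, one_pow]
    exact h.contraction_lt_one hn
  have hg0 : hg2.toLp _ = 0 := by
    refine eq_zero_of_inner_perturbation (lapOp n) (h.gamOp hn) hlt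
      (h.norm_gamOp_sub_lapOp_le hn) (fun φ => ?_) fun z hz => ?_
    · rw [inner_gamOp, ← hw φ]
      refine integral_congr_ae ?_
      filter_upwards [ae_restrict_of_ae hC] with x hx
      rw [mul_assoc, inv_mul_cancel_left₀ hx.1.ne']
    · obtain ⟨f, hfm, hfp, hf2, rfl⟩ := exists_periodic_rep z
      have hconst := ae_eq_const_of_weakly_harmonic hfm hfp hf2 fun φ hφ hφp => by
        rw [← inner_lapOp hf2 ⟨φ, hφ, hφp⟩]
        exact hz _
      rw [inner_toLp_eq]
      refine Eq.trans (integral_congr_ae (g := fun x => (∫ x in unitCell n, f x) *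
        (w x * (gam A b x)⁻¹)) ?_) (by rw [integral_const_mul, hJ, mul_zero])
      filter_upwards [hconst] with x hx
      rw [hx]
  filter_upwards [ae_eq_zero_of_toLp_eq_zero hg2 hg0, ae_restrict_of_ae hC] with x h1 h2
  exact (mul_eq_zero.1 h1).resolve_right (inv_pos.2 h2.1).ne'

end SettingB

theorem integrable_mul_of_memLp_two {α : Type*} [MeasurableSpace α] {μ : Measure α} {f g : α → ℝ}
    (hf : MemLp f 2 μ) (hg : MemLp g 2 μ) : Integrable (fun x => f x * g x) μ :=
  hf.integrable_mul hg

theorem memLp_pdLin {n : ℕ} (i : Fin n) (φ : perC2 n) :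
    MemLp (pdLin n i φ) 2 (volume.restrict (unitCell n)) :=
  ((φ.2.1.of_le one_le_two).continuous_pd i).memLp_top_unitCell.mono_exponent le_top

/-- The `L²`-class of a partial derivative. -/
def pdOp (n : ℕ) (i : Fin n) :
    perC2 n →ₗ[ℝ] Lp ℝ 2 ((volume : Measure (Fin n → ℝ)).restrict (unitCell n)) :=
  linearToLp (pdLin n i) (memLp_pdLin i)

theorem inner_pdOp {n : ℕ} {f : (Fin n → ℝ) → ℝ}
    (hf : MemLp f 2 (volume.restrict (unitCell n))) (i : Fin n) (φ : perC2 n) :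
    inner ℝ (hf.toLp f) (pdOp n i φ) = ∫ x in unitCell n, f x * pd φ i x :=
  inner_toLp_eq hf (memLp_pdLin i φ)

theorem norm_pdOp_le {n : ℕ} (i : Fin n) (φ : perC2 n) : ‖pdOp n i φ‖ ≤ 2 * ‖lapOp n φ‖ := by
  refine norm_toLp_le (memLp_pdLin i φ) (memLp_lapLin_two φ) zero_le_two ?_
  simp only [lapLin_apply]
  have hc1 := fun i j => φ.2.1.continuous_hess i j
  have hc2 := fun i => (φ.2.1.of_le one_le_two).continuous_pd i
  have h0 : 0 ≤ ∫ x in unitCell n, frobSq (hess φ x) :=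
    integral_nonneg fun x => frobSq_nonneg _
  have h1 : 0 ≤ ∫ x in unitCell n, (lap φ x) ^ 2 := integral_nonneg fun x => sq_nonneg _
  have h2 : ∫ x in unitCell n, (pd φ i x) ^ 2 ≤ ∫ x in unitCell n, euclSq (grad φ x) :=
    integral_mono ((hc2 i).pow 2).integrable_unitCell
      (continuous_finsetSum _ fun i _ => (hc2 i).pow 2).integrable_unitCell
      fun x => euclSq_apply_le (grad φ.1 x) i
  have h3 := integral_hess_add_grad_le φ.2.1 φ.2.2
  change ∫ x in unitCell n, (pd φ i x) ^ 2 ≤ _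
  linarith

namespace SettingB

variable {n : ℕ} {A : (Fin n → ℝ) → Matrix (Fin n) (Fin n) ℝ} {b : (Fin n → ℝ) → Fin n → ℝ}
  {lam Lam δ : ℝ}

theorem memLp_opLin_two (h : SettingB A b lam Lam δ) (φ : perC2 n) :
    MemLp (opLin A b φ) 2 (volume.restrict (unitCell n)) :=
  (memLp_opLin h.memLp_A h.memLp_b φ).mono_exponent le_top

/-- The `L²`-class of the nondivergence-form operator. -/
def op (h : SettingB A b lam Lam δ) :
    perC2 n →ₗ[ℝ] Lp ℝ 2 ((volume : Measure (Fin n → ℝ)).restrict (unitCell n)) :=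
  linearToLp (opLin A b) h.memLp_opLin_two

theorem inner_op (h : SettingB A b lam Lam δ) {f : (Fin n → ℝ) → ℝ}
    (hf : MemLp f 2 (volume.restrict (unitCell n))) (φ : perC2 n) :
    inner ℝ (hf.toLp f) (h.op φ) = ∫ x in unitCell n, f x * opLin A b φ x :=
  inner_toLp_eq hf (h.memLp_opLin_two φ)

theorem norm_gamOp_le (hn : 1 ≤ n) (h : SettingB A b lam Lam δ) (φ : perC2 n) :
    ‖h.gamOp hn φ‖ ≤ 1 / lam * ‖h.op φ‖ := by
  obtain ⟨C, hC⟩ := h.gam_bounds hn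
  refine norm_toLp_le (h.memLp_gamLin hn φ) (h.memLp_opLin_two φ)
    (one_div_nonneg.2 h.lam_pos.le) ?_
  rw [← integral_const_mul]
  refine integral_mono_ae (h.memLp_gamLin hn φ).integrable_sq
    ((h.memLp_opLin_two φ).integrable_sq.const_mul _) ?_
  filter_upwards [ae_restrict_of_ae hC] with x hx
  change (gam A b x * opLin A b φ x) ^ 2 ≤ _
  rw [mul_pow]
  exact mul_le_mul_of_nonneg_right (pow_le_pow_left₀ hx.1.le hx.2.1 2) (sq_nonneg _)

theorem norm_lapOp_le (hn : 1 ≤ n) (h : SettingB A b lam Lam δ) :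
    ∃ C : ℝ, ∀ φ : perC2 n, ‖lapOp n φ‖ ≤ C * ‖h.op φ‖ := by
  set t := Real.sqrt ((1 - δ) * (13 / 12)) with ht
  have hlt : t < 1 := by
    rw [ht, Real.sqrt_lt' one_pos, one_pow]
    exact h.contraction_lt_one hn
  refine ⟨1 / lam / (1 - t), fun φ => ?_⟩
  have h1 := h.norm_gamOp_sub_lapOp_le hn φ
  have h2 := h.norm_gamOp_le hn φ
  have h3 := norm_sub_norm_le (lapOp n φ) (h.gamOp hn φ)
  rw [norm_sub_rev] at h3
  rw [div_mul_eq_mul_div, le_div_iff₀ (by linarith)]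
  linarith

theorem exists_isWeakSolF (hn : 1 ≤ n) (h : SettingB A b lam Lam δ)
    {F : (Fin n → ℝ) → Fin n → ℝ}
    (hF : ∀ i, MemLp (fun x => F x i) 2 (volume.restrict (unitCell n))) :
    ∃ u : (Fin n → ℝ) → ℝ, IsWeakSolF A b F u := by
  obtain ⟨C, hC⟩ := h.norm_lapOp_le hn
  let l : perC2 n →ₗ[ℝ] ℝ :=
    -∑ i, (innerSL ℝ ((hF i).toLp _)).toLinearMap ∘ₗ pdOp n i
  have hl : ∀ φ, l φ = -∑ i, inner ℝ ((hF i).toLp _) (pdOp n i φ) := fun φ => by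
    simp [l, LinearMap.sum_apply]
  have hb : ∀ φ, |l φ| ≤ (∑ i, ‖(hF i).toLp _‖ * (2 * C)) * ‖h.op φ‖ := by
    intro φ
    rw [hl, abs_neg, Finset.sum_mul]
    refine (Finset.abs_sum_le_sum_abs _ _).trans (Finset.sum_le_sum fun i _ => ?_)
    refine (abs_real_inner_le_norm _ _).trans ?_
    rw [mul_assoc]
    refine mul_le_mul_of_nonneg_left ?_ (norm_nonneg _)
    linarith [norm_pdOp_le i φ, hC φ]
  obtain ⟨z, hz⟩ := exists_inner_eq_of_bound h.op l hb
  obtain ⟨u, hum, hup, hu2, rfl⟩ := exists_periodic_rep z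
  refine ⟨u, hum, hup, hu2.integrable_sq, fun φ hφ hφp => ?_⟩
  have h1 := hz ⟨φ, hφ, hφp⟩
  rw [inner_op, hl] at h1
  simp only [inner_pdOp, opLin_apply] at h1
  rw [h1, ← integral_finsetSum]
  · rfl
  · intro i _
    exact integrable_mul_of_memLp_two (hF i) (memLp_pdLin i ⟨φ, hφ, hφp⟩)

theorem ae_eq_smul_of_weak (hn : 1 ≤ n) (h : SettingB A b lam Lam δ) {r v : (Fin n → ℝ) → ℝ}
    (hr : IsInvariantMeasure A b r) (hvp : IsPeriodic v)
    (hv2 : MemLp v 2 (volume.restrict (unitCell n)))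
    (hv : ∀ φ : perC2 n, ∫ x in unitCell n, v x * opLin A b φ x = 0) :
    ∃ c : ℝ, ∀ᵐ x ∂(volume : Measure (Fin n → ℝ)), v x = c * r x := by
  obtain ⟨hrm, hrp, hr2, hr1, hrw⟩ := hr
  have hr2' : MemLp r 2 (volume.restrict (unitCell n)) :=
    (memLp_two_iff_integrable_sq hrm.aestronglyMeasurable).2 hr2
  have hrw' : ∀ φ : perC2 n, ∫ x in unitCell n, r x * opLin A b φ x = 0 := fun φ => by
    simp only [opLin_apply]
    exact hrw φ φ.2.1 φ.2.2
  have hγ : MemLp (fun x => (gam A b x)⁻¹) 2 (volume.restrict (unitCell n)) :=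
    (h.memLp_gam_inv hn).mono_exponent le_top
  have hJ : ∫ x in unitCell n, r x * (gam A b x)⁻¹ ≠ 0 := by
    intro hJ
    have h1 := integral_congr_ae (h.ae_eq_zero_of_weak hn hr2' hrw' hJ)
    rw [hr1] at h1
    simp at h1
  set c := (∫ x in unitCell n, v x * (gam A b x)⁻¹) / ∫ x in unitCell n, r x * (gam A b x)⁻¹
    with hc
  have hlin : ∀ f : (Fin n → ℝ) → ℝ, MemLp f 2 (volume.restrict (unitCell n)) →
      ∫ x in unitCell n, (v x - c * r x) * f x =
        (∫ x in unitCell n, v x * f x) - c * ∫ x in unitCell n, r x * f x := by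
    intro f hf
    rw [← integral_const_mul, ← integral_sub (integrable_mul_of_memLp_two hv2 hf)
      ((integrable_mul_of_memLp_two hr2' hf).const_mul c)]
    refine integral_congr_ae (Filter.Eventually.of_forall fun x => ?_)
    ring
  refine ⟨c, ?_⟩
  have h0 := IsPeriodic.ae_eq_zero (w := fun x => v x - c * r x)
    (fun x k => by change v _ - c * r _ = v _ - c * r _; rw [hvp x k, hrp x k])
    (h.ae_eq_zero_of_weak hn (hv2.sub (hr2'.const_mul c))
      (fun φ => by rw [hlin _ (h.memLp_opLin_two φ), hv, hrw', mul_zero, sub_zero])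
      (by rw [hlin _ hγ, hc, div_mul_cancel₀ _ hJ, sub_self]))
  filter_upwards [h0] with x hx
  exact sub_eq_zero.1 hx

end SettingB

theorem IsWeakSolF.memLp {n : ℕ} {A : (Fin n → ℝ) → Matrix (Fin n) (Fin n) ℝ}
    {b F : (Fin n → ℝ) → Fin n → ℝ} {u : (Fin n → ℝ) → ℝ} (hu : IsWeakSolF A b F u) :
    MemLp u 2 (volume.restrict (unitCell n)) :=
  (memLp_two_iff_integrable_sq hu.1.aestronglyMeasurable).2 hu.2.2.1

/-- In Setting B, for `F ∈ L²_per(Y;ℝⁿ)` the nonhomogeneous stationary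
FPK problem `-D²:(Au) + ∇·(bu) = ∇·F` admits a very weak solution `u ∈ L²_per(Y)`,
and any two solutions differ a.e. by a constant multiple of the invariant measure. -/
theorem stmt_2 {n : ℕ} (hn : 1 ≤ n)
    (A : (Fin n → ℝ) → Matrix (Fin n) (Fin n) ℝ) (b : (Fin n → ℝ) → Fin n → ℝ)
    (lam Lam δ : ℝ) (hAB : SettingB A b lam Lam δ)
    (F : (Fin n → ℝ) → Fin n → ℝ) (hF_meas : ∀ i, Measurable fun x => F x i)
    (hF_per : IsPeriodic F)
    (hF_L2 : IntegrableOn (fun x => euclSq (F x)) (unitCell n)) :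
    (∃ u : (Fin n → ℝ) → ℝ, IsWeakSolF A b F u) ∧
      ∀ r : (Fin n → ℝ) → ℝ, IsInvariantMeasure A b r →
        ∀ u₁ u₂ : (Fin n → ℝ) → ℝ, IsWeakSolF A b F u₁ → IsWeakSolF A b F u₂ →
          ∃ c : ℝ, ∀ᵐ x ∂(volume : Measure (Fin n → ℝ)), u₁ x - u₂ x = c * r x := by
  refine ⟨hAB.exists_isWeakSolF hn fun i => ?_, fun r hr u₁ u₂ h₁ h₂ => ?_⟩
  · refine (memLp_two_iff_integrable_sq (hF_meas i).aestronglyMeasurable).2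
      (hF_L2.mono' ((hF_meas i).pow_const 2).aestronglyMeasurable
        (Filter.Eventually.of_forall fun x => ?_))
    rw [Real.norm_eq_abs, abs_of_nonneg (sq_nonneg _)]
    exact euclSq_apply_le (F x) i
  · refine hAB.ae_eq_smul_of_weak hn hr (v := fun x => u₁ x - u₂ x)
      (fun x k => by change u₁ _ - u₂ _ = u₁ _ - u₂ _; rw [h₁.2.1 x k, h₂.2.1 x k])
      (h₁.memLp.sub h₂.memLp) fun φ => ?_
    have hφ := hAB.memLp_opLin_two φ
    simp only [sub_mul]
    rw [integral_sub (integrable_mul_of_memLp_two h₁.memLp hφ)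
      (integrable_mul_of_memLp_two h₂.memLp hφ)]
    simp only [opLin_apply]
    rw [h₁.2.2.2 φ φ.2.1 φ.2.2, h₂.2.2.2 φ φ.2.1 φ.2.2, sub_self]
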